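/- Let s : ℝ → ℝ be twice continuously differentiable on [0,∞) and satisfy s''(t) = 2 s(t)³ − t s(t) for all t ≥ 0, and suppose s(t)² ≤ M for all t ≥ 0. Let T > 2M and set λ = 1 − 2M/T. Let g : ℝ → ℝ be twice continuously differentiable on [0,∞) and satisfy g''(t) + λ t g(t) = 0 for all t ≥ 0, and let T ≤ a < b be consecutive zeros of g (that is, g(a) = 0, g(b) = 0, and g(t) ≠ 0 for all t ∈ (a,b)). Then s vanishes at some point of the open interval (a,b). -/

import Mathlib

open Set

/-!
Both equations have the form `y'' + q y = 0`, with `q = t - 2 s²` for `s` and `q = λ t` for `g`.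
The Wronskian `W = s' g - s g'` satisfies `W' = (2 s² + (λ - 1) t) s g`. If `s` had no zero in
`(a, b)`, we could arrange `s g > 0` there, so that `W` is antitone. On the other hand, since
`g` vanishes at `a` and `b`, there `W = -(s g)'` and `s g` is minimal, so `W a ≤ 0 ≤ W b`. Hence
`W` vanishes identically, which is impossible because `W' < 0` somewhere.
-/

theorem sub_mul_deriv_nonneg_of_isLocalMinOn {f : ℝ → ℝ} {f' x y : ℝ} {D : Set ℝ}
    (hmin : IsLocalMinOn f D x) (hf : HasDerivWithinAt f f' D x) (hxy : segment ℝ x y ⊆ D) :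
    0 ≤ (y - x) * f' := by
  simpa using hmin.hasFDerivWithinAt_nonneg hf.hasFDerivWithinAt
    (sub_mem_posTangentConeAt_of_segment_subset hxy)

theorem forall_pos_or_forall_neg_of_isPreconnected {X α : Type*} [TopologicalSpace X]
    [LinearOrder α] [TopologicalSpace α] [OrderClosedTopology α] [Zero α] {D : Set X} {f : X → α}
    (hD : IsPreconnected D) (hf : ContinuousOn f D) (hne : ∀ t ∈ D, f t ≠ 0) :
    (∀ t ∈ D, 0 < f t) ∨ ∀ t ∈ D, f t < 0 := by
  by_contra! ⟨⟨u, hu, hfu⟩, v, hv, hfv⟩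
  obtain ⟨x, hx, hfx⟩ := hD.intermediate_value hu hv hf ⟨hfu, hfv⟩
  exact hne x hx hfx

/-- The Wronskian `u' v - u v'` of `u` and `v`, whose derivatives `u'` and `v'` are passed
explicitly so that one-sided derivatives can be used at endpoints. -/
def wronskian (u u' v v' : ℝ → ℝ) (t : ℝ) : ℝ :=
  u' t * v t - u t * v' t

/-- `y` solves the linear equation `y'' + q y = 0` on `D`, with first derivative `y'`;
derivatives are taken within `D`. A nonlinear equation fits this form when `q` is allowed to
depend on `y`. -/
structure IsSturmSolutionOn (q y y' : ℝ → ℝ) (D : Set ℝ) : Prop where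
  hasDerivWithinAt : ∀ t ∈ D, HasDerivWithinAt y (y' t) D t
  hasDerivWithinAt_deriv : ∀ t ∈ D, HasDerivWithinAt y' (-(q t * y t)) D t

namespace IsSturmSolutionOn

variable {p q u u' v v' : ℝ → ℝ} {D E : Set ℝ} {a b : ℝ}

theorem mono (hu : IsSturmSolutionOn p u u' E) (hDE : D ⊆ E) : IsSturmSolutionOn p u u' D where
  hasDerivWithinAt t ht := (hu.hasDerivWithinAt t (hDE ht)).mono hDE
  hasDerivWithinAt_deriv t ht := (hu.hasDerivWithinAt_deriv t (hDE ht)).mono hDE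

theorem neg (hu : IsSturmSolutionOn p u u' D) : IsSturmSolutionOn p (-u) (-u') D where
  hasDerivWithinAt t ht := (hu.hasDerivWithinAt t ht).neg
  hasDerivWithinAt_deriv t ht := by
    simpa only [Pi.neg_apply, mul_neg] using (hu.hasDerivWithinAt_deriv t ht).neg

theorem continuousOn (hu : IsSturmSolutionOn p u u' D) : ContinuousOn u D :=
  fun t ht => (hu.hasDerivWithinAt t ht).continuousWithinAt

theorem hasDerivWithinAt_wronskian (hu : IsSturmSolutionOn p u u' D)
    (hv : IsSturmSolutionOn q v v' D) {t : ℝ} (ht : t ∈ D) :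
    HasDerivWithinAt (wronskian u u' v v') ((q t - p t) * (u t * v t)) D t :=
  (((hu.hasDerivWithinAt_deriv t ht).mul (hv.hasDerivWithinAt t ht)).sub
    ((hu.hasDerivWithinAt t ht).mul (hv.hasDerivWithinAt_deriv t ht))).congr_deriv (by ring)

theorem antitoneOn_wronskian (hu : IsSturmSolutionOn p u u' D) (hv : IsSturmSolutionOn q v v' D)
    (hD : Convex ℝ D) (hqp : ∀ t ∈ interior D, q t ≤ p t)
    (huv : ∀ t ∈ interior D, 0 ≤ u t * v t) : AntitoneOn (wronskian u u' v v') D :=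
  antitoneOn_of_hasDerivWithinAt_nonpos hD
    (fun _ ht => (hu.hasDerivWithinAt_wronskian hv ht).continuousWithinAt)
    (fun _ ht => (hu.hasDerivWithinAt_wronskian hv (interior_subset ht)).mono interior_subset)
    (fun t ht => mul_nonpos_of_nonpos_of_nonneg (sub_nonpos.2 (hqp t ht)) (huv t ht))

theorem sub_mul_wronskian_nonpos (hu : IsSturmSolutionOn p u u' D)
    (hv : IsSturmSolutionOn q v v' D) (huv : ∀ t ∈ D, 0 ≤ u t * v t) {x y : ℝ}
    (hvx : v x = 0) (hxy : segment ℝ x y ⊆ D) : (y - x) * wronskian u u' v v' x ≤ 0 := by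
  have hx : x ∈ D := hxy (left_mem_segment ℝ x y)
  have hmin : IsMinOn (u * v) D x := fun t ht => by simpa [hvx] using huv t ht
  have hderiv : HasDerivWithinAt (u * v) (-wronskian u u' v v' x) D x :=
    ((hu.hasDerivWithinAt x hx).mul (hv.hasDerivWithinAt x hx)).congr_deriv
      (by simp [wronskian, hvx])
  simpa using sub_mul_deriv_nonneg_of_isLocalMinOn hmin.localize hderiv hxy

theorem wronskian_eq_zero (hu : IsSturmSolutionOn p u u' (Icc a b))
    (hv : IsSturmSolutionOn q v v' (Icc a b)) (hab : a < b) (hva : v a = 0) (hvb : v b = 0)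
    (hqp : ∀ t ∈ Ioo a b, q t ≤ p t) (huv : ∀ t ∈ Icc a b, 0 ≤ u t * v t) :
    ∀ t ∈ Icc a b, wronskian u u' v v' t = 0 := by
  have hWa : wronskian u u' v v' a ≤ 0 :=
    nonpos_of_mul_nonpos_right (hu.sub_mul_wronskian_nonpos hv huv hva (segment_eq_Icc hab.le).le)
      (sub_pos.2 hab)
  have hWb : 0 ≤ wronskian u u' v v' b :=
    nonneg_of_mul_nonpos_right (hu.sub_mul_wronskian_nonpos hv huv hvb
      (by rw [segment_symm, segment_eq_Icc hab.le])) (sub_neg.2 hab)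
  have hanti : AntitoneOn (wronskian u u' v v') (Icc a b) :=
    hu.antitoneOn_wronskian hv (convex_Icc a b) (by rwa [interior_Icc])
      (fun t ht => huv t (interior_subset ht))
  intro t ht
  exact le_antisymm ((hanti (left_mem_Icc.2 hab.le) ht ht.1).trans hWa)
    (hWb.trans (hanti ht (right_mem_Icc.2 hab.le) ht.2))

theorem exists_mul_nonpos (hu : IsSturmSolutionOn p u u' (Icc a b))
    (hv : IsSturmSolutionOn q v v' (Icc a b)) (hva : v a = 0) (hvb : v b = 0)
    (hqp : ∀ t ∈ Ioo a b, q t ≤ p t) (hlt : ∃ t ∈ Ioo a b, q t < p t) :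
    ∃ t ∈ Ioo a b, u t * v t ≤ 0 := by
  by_contra! hpos
  obtain ⟨t, ht, hqpt⟩ := hlt
  have hab : a < b := ht.1.trans ht.2
  have hnonneg : ∀ x ∈ Icc a b, 0 ≤ u x * v x := fun x hx => by
    rcases eq_endpoints_or_mem_Ioo_of_mem_Icc hx with rfl | rfl | hx
    · simp [hva]
    · simp [hvb]
    · exact (hpos x hx).le
  have htI : t ∈ Icc a b := Ioo_subset_Icc_self ht
  have hW := hu.wronskian_eq_zero hv hab hva hvb hqp hnonneg
  have hW' : (q t - p t) * (u t * v t) = 0 :=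
    (uniqueDiffOn_Icc hab t htI).eq_deriv _ (hu.hasDerivWithinAt_wronskian hv htI)
      ((hasDerivWithinAt_const t (Icc a b) (0 : ℝ)).congr hW (hW t htI))
  exact (mul_neg_of_neg_of_pos (sub_neg.2 hqpt) (hpos t ht)).ne hW'

theorem exists_eq_zero_of_comparison (hu : IsSturmSolutionOn p u u' (Icc a b))
    (hv : IsSturmSolutionOn q v v' (Icc a b)) (hva : v a = 0) (hvb : v b = 0)
    (hv0 : ∀ t ∈ Ioo a b, v t ≠ 0) (hqp : ∀ t ∈ Ioo a b, q t ≤ p t)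
    (hlt : ∃ t ∈ Ioo a b, q t < p t) : ∃ x ∈ Ioo a b, u x = 0 := by
  by_contra! hu0
  have hcont : ContinuousOn (fun t => u t * v t) (Ioo a b) :=
    (hu.continuousOn.mul hv.continuousOn).mono Ioo_subset_Icc_self
  rcases forall_pos_or_forall_neg_of_isPreconnected isPreconnected_Ioo hcont
    (fun t ht => mul_ne_zero (hu0 t ht) (hv0 t ht)) with hpos | hneg
  · obtain ⟨t, ht, hle⟩ := hu.exists_mul_nonpos hv hva hvb hqp hlt
    exact (hpos t ht).not_ge hle
  · obtain ⟨t, ht, hle⟩ := hu.neg.exists_mul_nonpos hv hva hvb hqp hlt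
    rw [Pi.neg_apply, neg_mul, neg_nonpos] at hle
    exact (hneg t ht).not_ge hle

end IsSturmSolutionOn

theorem transcendent_vanishes_between_airy_zeros_general {s s' g g' : ℝ → ℝ} {M T a b : ℝ}
    (hT : 0 < T) (ha : T ≤ a) (hab : a < b)
    (hs : IsSturmSolutionOn (fun t => t - 2 * s t ^ 2) s s' (Icc a b))
    (hbound : ∀ t ∈ Ioo a b, s t ^ 2 ≤ M)
    (hg : IsSturmSolutionOn (fun t => (1 - 2 * M / T) * t) g g' (Icc a b))
    (hga : g a = 0) (hgb : g b = 0) (hne : ∀ t ∈ Ioo a b, g t ≠ 0) :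
    ∃ x ∈ Ioo a b, s x = 0 := by
  obtain ⟨m, hm⟩ : (Ioo a b).Nonempty := nonempty_Ioo.2 hab
  by_cases hsm : s m = 0
  · exact ⟨m, hm, hsm⟩
  have hM : 0 < M := (sq_pos_of_ne_zero hsm).trans_le (hbound m hm)
  have hlt : ∀ t ∈ Ioo a b, (1 - 2 * M / T) * t < t - 2 * s t ^ 2 := fun t ht => by
    have hTt : 1 < t / T := (one_lt_div hT).2 (ha.trans_lt ht.1)
    calc (1 - 2 * M / T) * t = t - 2 * (M * (t / T)) := by ring
      _ < t - 2 * M := by linarith [lt_mul_of_one_lt_right hM hTt]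
      _ ≤ t - 2 * s t ^ 2 := by linarith [hbound t ht]
  exact hs.exists_eq_zero_of_comparison hg hga hgb hne (fun t ht => (hlt t ht).le)
    ⟨m, hm, hlt m hm⟩

/-- Sturm comparison with modified Airy functions: if `s` solves `s'' = 2s³ − ts` on `[0,∞)`
with `s² ≤ M`, `T > 2M` and `λ = 1 − 2M/T`, then between any consecutive zeros `a < b` in
`[T,∞)` of a `λ`-Airy function `g` (a solution of `g'' + λtg = 0` on `[0,∞)`),
the function `s` vanishes. -/
theorem transcendent_vanishes_between_airy_zeros (s s' s'' g g' g'' : ℝ → ℝ) (M T : ℝ)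
    (hsderiv1 : ∀ t ∈ Ici (0:ℝ), HasDerivWithinAt s (s' t) (Ici 0) t)
    (hsderiv2 : ∀ t ∈ Ici (0:ℝ), HasDerivWithinAt s' (s'' t) (Ici 0) t)
    (hscont : ContinuousOn s'' (Ici 0))
    (hseq : ∀ t ∈ Ici (0:ℝ), s'' t = 2 * s t ^ 3 - t * s t)
    (hbound : ∀ t ∈ Ici (0:ℝ), s t ^ 2 ≤ M)
    (hT : 2 * M < T)
    (hgderiv1 : ∀ t ∈ Ici (0:ℝ), HasDerivWithinAt g (g' t) (Ici 0) t)
    (hgderiv2 : ∀ t ∈ Ici (0:ℝ), HasDerivWithinAt g' (g'' t) (Ici 0) t)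
    (hgcont : ContinuousOn g'' (Ici 0))
    (hgeq : ∀ t ∈ Ici (0:ℝ), g'' t + (1 - 2 * M / T) * t * g t = 0)
    (a b : ℝ) (ha : T ≤ a) (hab : a < b)
    (hga : g a = 0) (hgb : g b = 0) (hne : ∀ t ∈ Ioo a b, g t ≠ 0) :
    ∃ x ∈ Ioo a b, s x = 0 := by
  have hT0 : 0 < T := by linarith [sq_nonneg (s 0), hbound 0 self_mem_Ici]
  have hsub : Icc a b ⊆ Ici 0 := fun t ht => hT0.le.trans (ha.trans ht.1)
  have hs : IsSturmSolutionOn (fun t => t - 2 * s t ^ 2) s s' (Ici 0) :=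
    ⟨hsderiv1, fun t ht => (hsderiv2 t ht).congr_deriv (by rw [hseq t ht]; ring)⟩
  have hg : IsSturmSolutionOn (fun t => (1 - 2 * M / T) * t) g g' (Ici 0) :=
    ⟨hgderiv1, fun t ht => (hgderiv2 t ht).congr_deriv (eq_neg_of_add_eq_zero_left (hgeq t ht))⟩
  exact transcendent_vanishes_between_airy_zeros_general hT0 ha hab (hs.mono hsub)
    (fun t ht => hbound t (hsub (Ioo_subset_Icc_self ht))) (hg.mono hsub) hga hgb hne
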